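/- For every integer r ≥ 2 and every real ε > 0 there exists b₀ such that the following holds for every real b ≥ b₀ and every linear, triangle-free (r+1)-graph H on a vertex set V of size m ≥ 1: averaging over all independent sets Z of H (chosen uniformly at random), E[h(Z,b)] + e^b·E[|Z|] ≥ (1−ε)·b·m/(2^r·(−log(1−2^{−r}))). -/

import Mathlib

open Finset
open scoped Classical

/-- `Z` is an independent set of the hypergraph `H`: it contains no edge. -/
def IsIndep {V : Type*} [DecidableEq V] (H : Finset (Finset V)) (Z : Finset V) : Prop :=
  ∀ e ∈ H, ¬ e ⊆ Z

/-- The independence number of a hypergraph on a finite vertex type. -/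
noncomputable def indepNum {V : Type*} [Fintype V] [DecidableEq V]
    (H : Finset (Finset V)) : ℕ :=
  ((Finset.univ : Finset V).powerset.filter (fun Z => IsIndep H Z)).sup Finset.card

/-- `H` has maximum `r`-degree at most `d`: every `r`-element vertex set is
contained in at most `d` edges. -/
def maxDegLe {V : Type*} [DecidableEq V] (r : ℕ) (H : Finset (Finset V)) (d : ℕ) : Prop :=
  ∀ S : Finset V, S.card = r → (H.filter (fun e => S ⊆ e)).card ≤ d

/-- `H` is linear: no two distinct edges share two or more vertices. -/
def Linear {V : Type*} [DecidableEq V] (H : Finset (Finset V)) : Prop :=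
  ∀ e ∈ H, ∀ f ∈ H, e ≠ f → (e ∩ f).card ≤ 1

/-- `H` is triangle-free: there are no three distinct edges `e, f, g` with
`|e∩f| = |f∩g| = |g∩e| = 1` and `e∩f∩g = ∅`. -/
def TriangleFree {V : Type*} [DecidableEq V] (H : Finset (Finset V)) : Prop :=
  ¬ ∃ e ∈ H, ∃ f ∈ H, ∃ g ∈ H, e ≠ f ∧ f ≠ g ∧ e ≠ g ∧
      (e ∩ f).card = 1 ∧ (f ∩ g).card = 1 ∧ (g ∩ e).card = 1 ∧ e ∩ f ∩ g = ∅

/-- `ω_Z(v,b)`: the minimum of `b` and the number of `r`-element subsets `e ⊆ Z` with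
`e ∪ {v} ∈ H`. -/
noncomputable def omegaZ {V : Type*} [DecidableEq V] (r : ℕ) (H : Finset (Finset V))
    (Z : Finset V) (b : ℝ) (v : V) : ℝ :=
  min b (((Z.powersetCard r).filter (fun e => insert v e ∈ H)).card : ℝ)

/-- `h(Z,b) = Σ_{v ∈ V∖Z} ω_Z(v,b)`. -/
noncomputable def hZb {V : Type*} [Fintype V] [DecidableEq V] (r : ℕ)
    (H : Finset (Finset V)) (Z : Finset V) (b : ℝ) : ℝ :=
  ∑ v ∈ (Finset.univ : Finset V) \ Z, omegaZ r H Z b v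

/-!
Fix a vertex `v` and expose an independent set `Z` outside `{v} ∪ N(v)`. Linearity and
triangle-freeness say that an edge avoiding `v` meets `N(v)` in at most one vertex, so, given the
exposed part `W`, the trace of `Z` on `N(v)` may be any subset `S` of a determined set `F`, and `v`
may be added exactly when `S` contains none of the disjoint `r`-sets `P ⊆ F` completing `v` to an
edge. It thus suffices to treat a uniformly random `S ⊆ F` and `k` disjoint `r`-sets. If `k` is at
most a proportion `θ < 1` of `b / (-log (1 - 2⁻ʳ))`, then `S` contains none of the sets with
probability at least `(1 - 2⁻ʳ) ^ k ≥ exp (-θ b)`, and the weight `exp b` of `v` wins. Otherwise,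
keep only about that many of the sets: the number contained in `S` has mean `μ` below `b` by a
constant factor and variance at most `μ`, so truncating it at `b` costs only a bounded amount.
-/

open Filter
open scoped BigOperators

universe u

section RandomSubset

variable {α : Type*} [DecidableEq α] {F : Finset α} {I : Finset (Finset α)}

lemma card_filter_superset_powerset {P : Finset α} (hP : P ⊆ F) :
    (#{S ∈ F.powerset | P ⊆ S} : ℝ) = 2 ^ #F * (1 / 2 ^ #P) := by
  rw [← Finset.Icc_eq_filter_powerset, card_Icc_finset hP, Nat.cast_pow, Nat.cast_ofNat,
    pow_sub₀ _ two_ne_zero (card_le_card hP), one_div]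

lemma expect_powerset_subset {P : Finset α} (hP : P ⊆ F) :
    𝔼 S ∈ F.powerset, (if P ⊆ S then 1 else 0 : ℝ) = 1 / 2 ^ #P := by
  rw [expect_eq_sum_div_card, sum_boole, card_filter_superset_powerset hP, card_powerset,
    Nat.cast_pow, Nat.cast_ofNat, mul_div_cancel_left₀ _ (by positivity)]

lemma expect_card_filter_subset (hI : ∀ P ∈ I, P ⊆ F) :
    𝔼 S ∈ F.powerset, (#{P ∈ I | P ⊆ S} : ℝ) = ∑ P ∈ I, (1 / 2 ^ #P : ℝ) := by
  simp only [← sum_boole, expect_sum_comm]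
  exact sum_congr rfl fun P hP => expect_powerset_subset (hI P hP)

lemma expect_card_filter_subset_sq_le (hI : ∀ P ∈ I, P ⊆ F)
    (hdisj : (I : Set (Finset α)).PairwiseDisjoint id) :
    𝔼 S ∈ F.powerset, (#{P ∈ I | P ⊆ S} : ℝ) ^ 2 ≤
      ∑ P ∈ I, (1 / 2 ^ #P : ℝ) + (∑ P ∈ I, (1 / 2 ^ #P : ℝ)) ^ 2 := by
  have hpair : ∀ P ∈ I, ∀ Q ∈ I, 𝔼 S ∈ F.powerset, (if P ∪ Q ⊆ S then 1 else 0 : ℝ) ≤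
      (if P = Q then 1 / 2 ^ #P else 0) + 1 / 2 ^ #P * (1 / 2 ^ #Q) := by
    intro P hP Q hQ
    rw [expect_powerset_subset (union_subset (hI P hP) (hI Q hQ))]
    split_ifs with hPQ
    · rw [hPQ, union_self]
      exact le_add_of_nonneg_right (by positivity)
    · rw [card_union_of_disjoint (s := P) (t := Q) (hdisj hP hQ hPQ), pow_add, zero_add,
        one_div_mul_one_div]
  have hsq : ∀ S, (#{P ∈ I | P ⊆ S} : ℝ) ^ 2 =
      ∑ P ∈ I, ∑ Q ∈ I, if P ∪ Q ⊆ S then (1 : ℝ) else 0 := by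
    intro S
    simp only [← sum_boole, sq, sum_mul_sum, union_subset_iff, ite_and, ite_mul, one_mul, zero_mul]
  simp only [hsq, expect_sum_comm]
  calc ∑ P ∈ I, ∑ Q ∈ I, 𝔼 S ∈ F.powerset, (if P ∪ Q ⊆ S then 1 else 0 : ℝ)
      ≤ ∑ P ∈ I, ∑ Q ∈ I, ((if P = Q then 1 / 2 ^ #P else 0) + 1 / 2 ^ #P * (1 / 2 ^ #Q)) :=
        sum_le_sum fun P hP => sum_le_sum fun Q hQ => hpair P hP Q hQ
    _ = ∑ P ∈ I, (1 / 2 ^ #P : ℝ) + (∑ P ∈ I, (1 / 2 ^ #P : ℝ)) ^ 2 := by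
        simp only [sum_add_distrib, sum_ite_eq, sq, sum_mul_sum]
        congr 1
        exact sum_congr rfl fun P hP => if_pos hP

lemma expect_sq_sub_expect {ι : Type*} {s : Finset ι} (hs : s.Nonempty) (X : ι → ℝ) :
    𝔼 i ∈ s, (X i - 𝔼 j ∈ s, X j) ^ 2 = 𝔼 i ∈ s, X i ^ 2 - (𝔼 i ∈ s, X i) ^ 2 := by
  simp only [sub_sq, expect_add_distrib, expect_sub_distrib, expect_const hs, ← expect_mul,
    ← mul_expect]
  ring

lemma sub_div_le_expect_min {ι : Type*} {s : Finset ι} {X : ι → ℝ} {σ b : ℝ}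
    (hvar : 𝔼 i ∈ s, (X i - 𝔼 j ∈ s, X j) ^ 2 ≤ σ) (hb : 𝔼 i ∈ s, X i < b) :
    𝔼 i ∈ s, X i - σ / (4 * (b - 𝔼 i ∈ s, X i)) ≤ 𝔼 i ∈ s, min b (X i) := by
  set μ := 𝔼 i ∈ s, X i with hμ
  have hgap : 0 < 4 * (b - μ) := by linarith
  -- The parabola lies below `min b`, touching `b` at `x = 2 * b - μ` and the diagonal at `x = μ`.
  have hparabola : ∀ x : ℝ, x - (x - μ) ^ 2 / (4 * (b - μ)) ≤ min b x := by
    refine fun x => le_min ?_ (sub_le_self x (by positivity))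
    rw [sub_le_comm, le_div_iff₀ hgap]
    linarith [sq_nonneg (x - μ - 2 * (b - μ))]
  calc μ - σ / (4 * (b - μ)) ≤ μ - (𝔼 i ∈ s, (X i - μ) ^ 2) / (4 * (b - μ)) := by gcongr
    _ = 𝔼 i ∈ s, (X i - (X i - μ) ^ 2 / (4 * (b - μ))) := by
        rw [expect_sub_distrib, expect_div, hμ]
    _ ≤ 𝔼 i ∈ s, min b (X i) := expect_le_expect fun i _ => hparabola (X i)

lemma sub_div_le_expect_min_card_filter_subset {r : ℕ} {b : ℝ}
    (hI : ∀ P ∈ I, P ⊆ F) (hcard : ∀ P ∈ I, #P = r)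
    (hdisj : (I : Set (Finset α)).PairwiseDisjoint id) (hb : #I * (1 / 2 ^ r : ℝ) < b) :
    #I * (1 / 2 ^ r : ℝ) - #I * (1 / 2 ^ r : ℝ) / (4 * (b - #I * (1 / 2 ^ r : ℝ))) ≤
      𝔼 S ∈ F.powerset, min b (#{P ∈ I | P ⊆ S} : ℝ) := by
  have hsum : ∑ P ∈ I, (1 / 2 ^ #P : ℝ) = #I * (1 / 2 ^ r) := by
    rw [sum_congr rfl fun P hP => by rw [hcard P hP], sum_const, nsmul_eq_mul]
  have hmean := expect_card_filter_subset hI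
  have hsq := expect_card_filter_subset_sq_le hI hdisj
  rw [hsum] at hmean hsq
  rw [← hmean] at hb ⊢
  refine sub_div_le_expect_min ?_ hb
  rw [expect_sq_sub_expect (powerset_nonempty F), hmean]
  linarith

/-- The probability that a uniformly random subset of `F` contains no member of `I`. -/
noncomputable def avoidProb (F : Finset α) (I : Finset (Finset α)) : ℝ :=
  #{S ∈ F.powerset | IsIndep I S} / 2 ^ #F

lemma avoidProb_nonneg : 0 ≤ avoidProb F I := by
  unfold avoidProb
  positivity

lemma avoidProb_le_one : avoidProb F I ≤ 1 := by
  refine div_le_one_of_le₀ ?_ (by positivity)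
  exact_mod_cast (card_filter_le F.powerset _).trans_eq (card_powerset F)

lemma IsIndep.mono {Z Z' : Finset α} (hZ' : IsIndep I Z') (h : Z ⊆ Z') : IsIndep I Z :=
  fun e he heZ => hZ' e he (heZ.trans h)

lemma avoidProb_singleton {P : Finset α} (hP : P ⊆ F) : avoidProb F {P} = 1 - 1 / 2 ^ #P := by
  have hsplit : (#{S ∈ F.powerset | P ⊆ S} : ℝ) + #{S ∈ F.powerset | ¬ P ⊆ S} = 2 ^ #F := by
    exact_mod_cast (card_filter_add_card_filter_not _).trans (card_powerset F)
  rw [card_filter_superset_powerset hP] at hsplit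
  simp only [avoidProb, IsIndep, mem_singleton, forall_eq]
  rw [div_eq_iff (by positivity)]
  linarith

lemma avoidProb_mul_avoidProb_le_avoidProb_union (F : Finset α) (I J : Finset (Finset α)) :
    avoidProb F I * avoidProb F J ≤ avoidProb F (I ∪ J) := by
  have hlower : ∀ K : Finset (Finset α),
      IsLowerSet (({S ∈ F.powerset | IsIndep K S} : Finset (Finset α)) : Set (Finset α)) := by
    intro K S T hTS hS
    simp only [coe_filter, mem_powerset, Set.mem_ofPred_eq] at hS ⊢
    exact ⟨hTS.trans hS.1, hS.2.mono hTS⟩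
  have hsubset : ∀ K : Finset (Finset α), ∀ S ∈ ({S ∈ F.powerset | IsIndep K S} : Finset _),
      S ⊆ F := fun K S hS => mem_powerset.1 (mem_of_mem_filter S hS)
  have hinter : ({S ∈ F.powerset | IsIndep I S} : Finset _) ∩ {S ∈ F.powerset | IsIndep J S} =
      {S ∈ F.powerset | IsIndep (I ∪ J) S} := by
    rw [← filter_and]
    exact filter_congr fun S _ => forall_mem_union.symm
  have hharris := (hlower I).le_card_inter_finset' (hlower J) (hsubset I) (hsubset J)
  rw [hinter] at hharris
  unfold avoidProb
  rw [div_mul_div_comm, div_le_div_iff₀ (by positivity) (by positivity)]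
  calc (#{S ∈ F.powerset | IsIndep I S} * #{S ∈ F.powerset | IsIndep J S} : ℝ) * 2 ^ #F
      ≤ (2 ^ #F * #{S ∈ F.powerset | IsIndep (I ∪ J) S}) * 2 ^ #F :=
        mul_le_mul_of_nonneg_right (by exact_mod_cast hharris) (by positivity)
    _ = #{S ∈ F.powerset | IsIndep (I ∪ J) S} * (2 ^ #F * 2 ^ #F) := by ring

lemma prod_one_sub_le_avoidProb (hI : ∀ P ∈ I, P ⊆ F) :
    ∏ P ∈ I, (1 - 1 / 2 ^ #P : ℝ) ≤ avoidProb F I := by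
  induction I using Finset.induction_on with
  | empty => simp [avoidProb, IsIndep]
  | insert P I hP ih =>
    rw [forall_mem_insert] at hI
    rw [prod_insert hP, ← avoidProb_singleton hI.1, insert_eq]
    exact (mul_le_mul_of_nonneg_left (ih hI.2) avoidProb_nonneg).trans
      (avoidProb_mul_avoidProb_le_avoidProb_union F {P} I)

/-- The rate at which `k` disjoint `r`-sets are avoided: a uniformly random set contains none of
them with probability `(1 - 2⁻ʳ) ^ k = exp (-(k * avoidanceRate r))`. -/
noncomputable def avoidanceRate (r : ℕ) : ℝ :=
  -Real.log (1 - 1 / 2 ^ r)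

lemma one_div_two_pow_lt_one {r : ℕ} (hr : 1 ≤ r) : (1 / 2 ^ r : ℝ) < 1 := by
  rw [one_div]
  exact inv_lt_one_of_one_lt₀ (one_lt_pow₀ one_lt_two (by lia))

lemma exp_neg_avoidanceRate {r : ℕ} (hr : 1 ≤ r) :
    Real.exp (-avoidanceRate r) = 1 - 1 / 2 ^ r := by
  rw [avoidanceRate, neg_neg, Real.exp_log (sub_pos.2 (one_div_two_pow_lt_one hr))]

lemma one_div_two_pow_le_avoidanceRate {r : ℕ} (hr : 1 ≤ r) :
    1 / 2 ^ r ≤ avoidanceRate r := by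
  have := Real.log_le_sub_one_of_pos (sub_pos.2 (one_div_two_pow_lt_one hr))
  rw [avoidanceRate]
  linarith

lemma avoidanceRate_pos {r : ℕ} (hr : 1 ≤ r) : 0 < avoidanceRate r :=
  lt_of_lt_of_le (by positivity) (one_div_two_pow_le_avoidanceRate hr)

lemma exp_neg_card_mul_avoidanceRate_le_avoidProb {r : ℕ} (hr : 1 ≤ r)
    (hI : ∀ P ∈ I, P ⊆ F) (hcard : ∀ P ∈ I, #P = r) :
    Real.exp (-(#I * avoidanceRate r)) ≤ avoidProb F I := by
  calc Real.exp (-(#I * avoidanceRate r)) = (1 - 1 / 2 ^ r) ^ #I := by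
        rw [← mul_neg, Real.exp_nat_mul, exp_neg_avoidanceRate hr]
    _ = ∏ P ∈ I, (1 - 1 / 2 ^ #P : ℝ) := by
        rw [prod_congr rfl fun P hP => by rw [hcard P hP], prod_const]
    _ ≤ avoidProb F I := prod_one_sub_le_avoidProb hI

/-- The excess weight, over a target `t` per independent set, of a pair `Z`, `insert v Z`, where
`S` is the trace of `Z` on the neighbourhood of `v` and `I` is the link of `v`. The set `Z` weighs
`ω_Z(v,b)`; the set `insert v Z` weighs `exp b` and counts only if it is independent. -/
noncomputable def surplus (b t : ℝ) (I : Finset (Finset α)) (S : Finset α) : ℝ :=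
  (min b #{P ∈ I | P ⊆ S} - t) + if IsIndep I S then Real.exp b - t else 0

lemma expect_surplus (b t : ℝ) (F : Finset α) (I : Finset (Finset α)) :
    𝔼 S ∈ F.powerset, surplus b t I S =
      𝔼 S ∈ F.powerset, min b (#{P ∈ I | P ⊆ S} : ℝ) - t + avoidProb F I * (Real.exp b - t) := by
  have hindicator : 𝔼 S ∈ F.powerset, (if IsIndep I S then Real.exp b - t else 0) =
      avoidProb F I * (Real.exp b - t) := by
    rw [expect_eq_sum_div_card, ← sum_filter, sum_const, nsmul_eq_mul, card_powerset, avoidProb]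
    push_cast
    ring
  simp only [surplus, expect_add_distrib, expect_sub_distrib, expect_const (powerset_nonempty F),
    hindicator]

lemma expect_surplus_nonneg_of_card_le {r : ℕ} {b t θ : ℝ} (hr : 1 ≤ r) (hb : 0 ≤ b) (ht : t ≤ b)
    (hI : ∀ P ∈ I, P ⊆ F) (hcard : ∀ P ∈ I, #P = r) (hIθ : #I * avoidanceRate r ≤ θ * b)
    (hexp : 2 * b ≤ Real.exp ((1 - θ) * b)) :
    0 ≤ 𝔼 S ∈ F.powerset, surplus b t I S := by
  have havoid : 2 * b ≤ avoidProb F I * Real.exp b := by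
    calc 2 * b ≤ Real.exp (-(#I * avoidanceRate r) + b) :=
          hexp.trans (Real.exp_le_exp.2 (by linarith))
      _ = Real.exp (-(#I * avoidanceRate r)) * Real.exp b := Real.exp_add _ _
      _ ≤ avoidProb F I * Real.exp b := by
          gcongr
          exact exp_neg_card_mul_avoidanceRate_le_avoidProb hr hI hcard
  have htq : avoidProb F I * t ≤ b :=
    (mul_le_mul_of_nonneg_left ht avoidProb_nonneg).trans
      (mul_le_of_le_one_left hb avoidProb_le_one)
  have hmin : 0 ≤ 𝔼 S ∈ F.powerset, min b (#{P ∈ I | P ⊆ S} : ℝ) :=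
    expect_nonneg fun S _ => le_min hb (Nat.cast_nonneg _)
  rw [expect_surplus]
  linarith

lemma expect_surplus_nonneg_of_subset {J : Finset (Finset α)} {r : ℕ} {b t : ℝ} (hJI : J ⊆ I)
    (hI : ∀ P ∈ I, P ⊆ F) (hcard : ∀ P ∈ I, #P = r)
    (hdisj : (I : Set (Finset α)).PairwiseDisjoint id) (ht : t ≤ b)
    (hJb : #J * (1 / 2 ^ r : ℝ) < b)
    (htJ : t ≤
      #J * (1 / 2 ^ r : ℝ) - #J * (1 / 2 ^ r : ℝ) / (4 * (b - #J * (1 / 2 ^ r : ℝ)))) :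
    0 ≤ 𝔼 S ∈ F.powerset, surplus b t I S := by
  have htmin : t ≤ 𝔼 S ∈ F.powerset, min b (#{P ∈ I | P ⊆ S} : ℝ) := by
    calc t ≤ 𝔼 S ∈ F.powerset, min b (#{P ∈ J | P ⊆ S} : ℝ) :=
          htJ.trans <| sub_div_le_expect_min_card_filter_subset (fun P hP => hI P (hJI hP))
            (fun P hP => hcard P (hJI hP)) (hdisj.subset (coe_subset.2 hJI)) hJb
      _ ≤ 𝔼 S ∈ F.powerset, min b (#{P ∈ I | P ⊆ S} : ℝ) := by
          refine expect_le_expect fun S _ => min_le_min_left b ?_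
          exact_mod_cast card_le_card (filter_subset_filter _ hJI)
  have hexp : t ≤ Real.exp b := by linarith [Real.add_one_le_exp b]
  rw [expect_surplus]
  exact add_nonneg (sub_nonneg.2 htmin) (mul_nonneg avoidProb_nonneg (sub_nonneg.2 hexp))

end RandomSubset

lemma eventually_mul_le_sub_div {a κ : ℝ} (ha : a < κ) (hκ : κ < 1) :
    ∀ᶠ b in atTop, ∀ μ, κ * b ≤ μ → μ ≤ κ * b + 1 →
      μ < b ∧ a * b ≤ μ - μ / (4 * (b - μ)) := by
  have hκ' : 0 < 1 - κ := sub_pos.2 hκ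
  have ha' : 0 < κ - a := sub_pos.2 ha
  filter_upwards [eventually_gt_atTop 0, eventually_ge_atTop (2 / (1 - κ)),
    eventually_ge_atTop (1 / (2 * (1 - κ)) / (κ - a))] with b hb hgap hcost μ hlow hup
  rw [div_le_iff₀ hκ'] at hgap
  rw [div_le_iff₀ ha'] at hcost
  have hb_sub : (1 - κ) * b / 2 ≤ b - μ := by linarith
  have hμb : 0 < b - μ := lt_of_lt_of_le (by positivity) hb_sub
  have hbounded : μ / (4 * (b - μ)) ≤ 1 / (2 * (1 - κ)) := by
    rw [div_le_div_iff₀ (by positivity) (by positivity)]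
    linarith [mul_pos hκ' hμb]
  exact ⟨sub_pos.1 hμb, by linarith⟩

lemma eventually_two_mul_le_exp_mul {c : ℝ} (hc : 0 < c) :
    ∀ᶠ b in atTop, 2 * b ≤ Real.exp (c * b) := by
  filter_upwards [(isLittleO_pow_exp_pos_mul_atTop 1 hc).bound (half_pos one_pos)] with b hb
  rw [pow_one, Real.norm_eq_abs, Real.norm_eq_abs, Real.abs_exp] at hb
  linarith [le_abs_self b]

theorem eventually_expect_surplus_nonneg {r : ℕ} (hr : 1 ≤ r) {δ : ℝ} (hδ : δ < 1) :
    ∀ᶠ b in atTop, ∀ (α : Type u) [DecidableEq α] (F : Finset α) (I : Finset (Finset α)),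
      (∀ P ∈ I, P ⊆ F) → (∀ P ∈ I, #P = r) → (I : Set (Finset α)).PairwiseDisjoint id →
      0 ≤ 𝔼 S ∈ F.powerset, surplus b (δ * b / (2 ^ r * avoidanceRate r)) I S := by
  have hL := avoidanceRate_pos hr
  set c : ℝ := 1 / 2 ^ r / avoidanceRate r with hc
  have hc0 : 0 < c := by positivity
  have hc1 : c ≤ 1 := (div_le_one hL).2 (one_div_two_pow_le_avoidanceRate hr)
  obtain ⟨θ, hθ, hθ1⟩ := exists_between (max_lt hδ one_pos)
  obtain ⟨hδθ, hθ0⟩ := max_lt_iff.1 hθ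
  have hκ1 : θ * c < 1 := (mul_le_of_le_one_right hθ0.le hc1).trans_lt hθ1
  filter_upwards [eventually_ge_atTop 0, eventually_two_mul_le_exp_mul (sub_pos.2 hθ1),
    eventually_mul_le_sub_div (mul_lt_mul_of_pos_right hδθ hc0) hκ1]
    with b hb hexp hmean α _ F I hI hcard hdisj
  have ht : δ * b / (2 ^ r * avoidanceRate r) = δ * c * b := by
    rw [hc]
    field_simp
  have htb : δ * c * b ≤ b :=
    mul_le_of_le_one_left hb ((mul_lt_mul_of_pos_right hδθ hc0).trans hκ1).le
  rw [ht]
  set k := ⌈θ * b / avoidanceRate r⌉₊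
  rcases lt_or_ge #I k with hIk | hkI
  · have hfew := Nat.lt_ceil.1 hIk
    rw [lt_div_iff₀ hL] at hfew
    exact expect_surplus_nonneg_of_card_le hr hb htb hI hcard hfew.le hexp
  · obtain ⟨J, hJI, hJcard⟩ := exists_subset_card_eq hkI
    have hscale : θ * c * b = θ * b / avoidanceRate r * (1 / 2 ^ r) := by
      rw [hc]
      ring
    have hlow : θ * c * b ≤ #J * (1 / 2 ^ r) := by
      rw [hscale, hJcard]
      gcongr
      exact Nat.le_ceil _
    have hup : #J * (1 / 2 ^ r) ≤ θ * c * b + 1 := by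
      calc #J * (1 / 2 ^ r : ℝ) ≤ (θ * b / avoidanceRate r + 1) * (1 / 2 ^ r) := by
            rw [hJcard]
            gcongr
            exact (Nat.ceil_lt_add_one (by positivity)).le
        _ ≤ θ * c * b + 1 := by
            rw [add_one_mul, ← hscale]
            gcongr
            exact (one_div_two_pow_lt_one hr).le
    obtain ⟨hJb, htJ⟩ := hmean _ hlow hup
    exact expect_surplus_nonneg_of_subset hJI hI hcard hdisj htb hJb htJ

section Hypergraph

variable {V : Type*} [DecidableEq V] {H : Finset (Finset V)} {v : V} {W S : Finset V}

lemma Linear.eq_of_mem_inter (hlin : Linear H) {e f : Finset V} (he : e ∈ H) (hf : f ∈ H)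
    (hef : e ≠ f) {x y : V} (hx : x ∈ e ∩ f) (hy : y ∈ e ∩ f) : x = y :=
  card_le_one.1 (hlin e he f hf hef) x hx y hy

lemma Linear.pairwiseDisjoint_memberSubfamily (hlin : Linear H) (v : V) :
    (H.memberSubfamily v : Set (Finset V)).PairwiseDisjoint id := by
  intro P hP Q hQ hPQ
  obtain ⟨hPH, hvP⟩ := mem_memberSubfamily.1 hP
  obtain ⟨hQH, hvQ⟩ := mem_memberSubfamily.1 hQ
  have hne : insert v P ≠ insert v Q := fun h => hPQ <| by
    rw [← erase_insert hvP, h, erase_insert hvQ]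
  refine disjoint_left.2 fun x (hxP : x ∈ P) (hxQ : x ∈ Q) => ?_
  have hxv : x = v := hlin.eq_of_mem_inter hPH hQH hne (by simp [hxP, hxQ]) (by simp)
  exact hvP (hxv ▸ hxP)

lemma TriangleFree.nonempty_inter_inter (htri : TriangleFree H) (hlin : Linear H)
    {e f g : Finset V} (he : e ∈ H) (hf : f ∈ H) (hg : g ∈ H) (hef : e ≠ f) (hfg : f ≠ g)
    (heg : e ≠ g) (hef' : (e ∩ f).Nonempty) (hfg' : (f ∩ g).Nonempty)
    (hge' : (g ∩ e).Nonempty) : (e ∩ f ∩ g).Nonempty := by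
  by_contra hempty
  exact htri ⟨e, he, f, hf, g, hg, hef, hfg, heg,
    (hlin e he f hf hef).antisymm hef'.card_pos, (hlin f hf g hg hfg).antisymm hfg'.card_pos,
    (hlin g hg e he heg.symm).antisymm hge'.card_pos, not_nonempty_iff_eq_empty.1 hempty⟩

/-- The neighbourhood of `v`: the vertices other than `v` that share an edge with `v`. -/
def nbhd (H : Finset (Finset V)) (v : V) : Finset V :=
  (H.memberSubfamily v).biUnion id

lemma mem_nbhd {x : V} : x ∈ nbhd H v ↔ ∃ P ∈ H.memberSubfamily v, x ∈ P :=
  mem_biUnion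

lemma subset_nbhd {P : Finset V} (hP : P ∈ H.memberSubfamily v) : P ⊆ nbhd H v :=
  subset_biUnion_of_mem id hP

lemma notMem_nbhd_self : v ∉ nbhd H v := by
  rw [mem_nbhd]
  rintro ⟨P, hP, hvP⟩
  exact (mem_memberSubfamily.1 hP).2 hvP

lemma TriangleFree.card_inter_nbhd_le_one (htri : TriangleFree H) (hlin : Linear H)
    {e : Finset V} (he : e ∈ H) (hve : v ∉ e) : #(e ∩ nbhd H v) ≤ 1 := by
  refine card_le_one.2 fun x hx y hy => ?_
  obtain ⟨hxe, hxN⟩ := mem_inter.1 hx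
  obtain ⟨hye, hyN⟩ := mem_inter.1 hy
  obtain ⟨P, hP, hxP⟩ := mem_nbhd.1 hxN
  obtain ⟨Q, hQ, hyQ⟩ := mem_nbhd.1 hyN
  have hPH := (mem_memberSubfamily.1 hP).1
  have hQH := (mem_memberSubfamily.1 hQ).1
  have hPe : insert v P ≠ e := fun h => hve (h ▸ mem_insert_self v P)
  have heQ : e ≠ insert v Q := fun h => hve (h ▸ mem_insert_self v Q)
  by_cases hPQ : insert v P = insert v Q
  · have hyP : y ∈ insert v P := hPQ ▸ mem_insert_of_mem hyQ
    exact hlin.eq_of_mem_inter hPH he hPe (by simp [hxP, hxe]) (by simp [hyP, hye])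
  · obtain ⟨w, hw⟩ := htri.nonempty_inter_inter hlin hPH he hQH hPe heQ hPQ
      ⟨x, by simp [hxP, hxe]⟩ ⟨y, by simp [hyQ, hye]⟩ ⟨v, by simp⟩
    obtain ⟨⟨hwP, hwe⟩, hwQ⟩ : (w ∈ insert v P ∧ w ∈ e) ∧ w ∈ insert v Q := by
      simpa only [mem_inter] using hw
    have hwv : w = v := hlin.eq_of_mem_inter hPH hQH hPQ (mem_inter.2 ⟨hwP, hwQ⟩) (by simp)
    exact absurd (hwv ▸ hwe) hve

lemma isIndep_insert_iff :
    IsIndep H (insert v S) ↔ IsIndep H S ∧ IsIndep (H.memberSubfamily v) S := by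
  refine ⟨fun h => ⟨h.mono (subset_insert v S), fun P hP hPS =>
    h _ (mem_memberSubfamily.1 hP).1 (insert_subset_insert v hPS)⟩, ?_⟩
  rintro ⟨hS, hlink⟩ e he heS
  by_cases hve : v ∈ e
  · refine hlink (e.erase v) (mem_memberSubfamily.2 ⟨?_, notMem_erase v e⟩)
      (subset_insert_iff.1 heS)
    rwa [insert_erase hve]
  · exact hS e he ((subset_insert_iff_of_notMem hve).1 heS)

lemma isIndep_union_iff (hW : IsIndep H W) (hS : ∀ e ∈ H, e ⊆ W ∪ S → #(e ∩ S) ≤ 1) :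
    IsIndep H (W ∪ S) ↔ ∀ x ∈ S, IsIndep H (insert x W) := by
  refine ⟨fun h x hx => h.mono (insert_subset (mem_union_right W hx) subset_union_left), ?_⟩
  intro h e he heWS
  have hWe : ∀ y ∈ e, y ∉ S → y ∈ W := fun y hy hyS => (mem_union.1 (heWS hy)).resolve_right hyS
  obtain hempty | ⟨x, hx⟩ := (e ∩ S).eq_empty_or_nonempty
  · exact hW e he fun y hy => hWe y hy fun hyS =>
      notMem_empty y (hempty ▸ mem_inter.2 ⟨hy, hyS⟩)
  · refine h x (mem_inter.1 hx).2 e he fun y hy => mem_insert.2 ?_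
    refine or_iff_not_imp_right.2 fun hyW => ?_
    have hyS : y ∈ S := by_contra fun hyS => hyW (hWe y hy hyS)
    exact card_le_one.1 (hS e he heWS) y (mem_inter.2 ⟨hy, hyS⟩) x hx

/-- The neighbours of `v` that can each be added to `W` without creating an edge. -/
noncomputable def freeNbhd (H : Finset (Finset V)) (v : V) (W : Finset V) : Finset V :=
  {x ∈ nbhd H v | IsIndep H (insert x W)}

lemma freeNbhd_subset_nbhd : freeNbhd H v W ⊆ nbhd H v :=
  filter_subset _ _

lemma TriangleFree.isIndep_union_iff_subset_freeNbhd (htri : TriangleFree H) (hlin : Linear H)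
    (hW : IsIndep H W) (hvW : v ∉ W) (hS : S ⊆ nbhd H v) :
    IsIndep H (W ∪ S) ↔ S ⊆ freeNbhd H v W := by
  rw [isIndep_union_iff hW]
  · exact ⟨fun h x hx => mem_filter.2 ⟨hS hx, h x hx⟩, fun h x hx => (mem_filter.1 (h hx)).2⟩
  · intro e he heWS
    have hve : v ∉ e := fun hve =>
      (mem_union.1 (heWS hve)).elim hvW fun hvS => notMem_nbhd_self (hS hvS)
    exact (card_le_card (inter_subset_inter_left hS)).trans
      (htri.card_inter_nbhd_le_one hlin he hve)

lemma surplus_union {b t : ℝ} (hW : Disjoint (nbhd H v) W) {F : Finset V} (hS : S ⊆ F) :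
    surplus b t (H.memberSubfamily v) (W ∪ S) =
      surplus b t {P ∈ H.memberSubfamily v | P ⊆ F} S := by
  have hsubset : ∀ P ∈ H.memberSubfamily v, P ⊆ W ∪ S ↔ P ⊆ F ∧ P ⊆ S := fun P hP =>
    ⟨fun h => have hPS := (hW.mono_left (subset_nbhd hP)).left_le_of_le_sup_left h
      ⟨hPS.trans hS, hPS⟩, fun h => h.2.trans subset_union_right⟩
  have hindep : IsIndep (H.memberSubfamily v) (W ∪ S) ↔
      IsIndep {P ∈ H.memberSubfamily v | P ⊆ F} S := by
    simp only [IsIndep, mem_filter, and_imp]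
    exact forall₂_congr fun P hP => by rw [hsubset P hP, not_and]
  rw [surplus, surplus, filter_congr hsubset, filter_filter, if_congr hindep rfl rfl]

lemma sum_eq_sum_nonMemberSubfamily_add_sum_memberSubfamily {M : Type*} [AddCommMonoid M]
    (𝒜 : Finset (Finset V)) (v : V) (f : Finset V → M) :
    ∑ Z ∈ 𝒜, f Z =
      ∑ Z ∈ 𝒜.nonMemberSubfamily v, f Z + ∑ Z ∈ 𝒜.memberSubfamily v, f (insert v Z) := by
  have hmem : ∑ Z ∈ 𝒜 with v ∈ Z, f Z = ∑ Z ∈ 𝒜.memberSubfamily v, f (insert v Z) := by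
    refine sum_nbij' (erase · v) (insert v) ?_ ?_ ?_ ?_ ?_
    all_goals simp only [mem_filter, mem_memberSubfamily]
    · rintro Z ⟨hZ, hvZ⟩
      exact ⟨by rwa [insert_erase hvZ], notMem_erase v Z⟩
    · exact fun Z hZ => ⟨hZ.1, mem_insert_self v Z⟩
    · exact fun Z hZ => insert_erase hZ.2
    · exact fun Z hZ => erase_insert hZ.2
    · exact fun Z hZ => by rw [insert_erase hZ.2]
  rw [← hmem, add_comm]
  exact (sum_filter_add_sum_filter_not 𝒜 (v ∈ ·) f).symm

lemma card_of_mem_memberSubfamily {r : ℕ} (hH : ∀ e ∈ H, #e = r + 1) {P : Finset V}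
    (hP : P ∈ H.memberSubfamily v) : #P = r := by
  obtain ⟨hPH, hvP⟩ := mem_memberSubfamily.1 hP
  exact Nat.succ_injective ((card_insert_of_notMem hvP).symm.trans (hH _ hPH))

lemma omegaZ_eq_min_card_filter_subset {r : ℕ} (hH : ∀ e ∈ H, #e = r + 1) {Z : Finset V}
    (hvZ : v ∉ Z) (b : ℝ) :
    omegaZ r H Z b v = min b (#{P ∈ H.memberSubfamily v | P ⊆ Z} : ℝ) := by
  unfold omegaZ
  congr 3
  ext P
  simp only [mem_filter, mem_powersetCard]
  constructor
  · rintro ⟨⟨hPZ, -⟩, hP⟩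
    exact ⟨mem_memberSubfamily.2 ⟨hP, fun hv => hvZ (hPZ hv)⟩, hPZ⟩
  · rintro ⟨hP, hPZ⟩
    exact ⟨⟨hPZ, card_of_mem_memberSubfamily hH hP⟩, (mem_memberSubfamily.1 hP).1⟩

/-- The contribution of the vertex `v` to `h(Z,b) + exp b * |Z|`. -/
noncomputable def vertexWeight (r : ℕ) (H : Finset (Finset V)) (b : ℝ) (v : V) (Z : Finset V) :
    ℝ :=
  if v ∈ Z then Real.exp b else omegaZ r H Z b v

variable [Fintype V]

/-- The family of all independent sets of `H`. -/
noncomputable def indepSets (H : Finset (Finset V)) : Finset (Finset V) :=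
  {Z | IsIndep H Z}

lemma mem_indepSets {Z : Finset V} : Z ∈ indepSets H ↔ IsIndep H Z := by
  simp only [indepSets, mem_filter_univ]

lemma memberSubfamily_indepSets (v : V) :
    (indepSets H).memberSubfamily v =
      {Z ∈ (indepSets H).nonMemberSubfamily v | IsIndep (H.memberSubfamily v) Z} := by
  ext Z
  rw [mem_memberSubfamily, mem_filter, mem_nonMemberSubfamily, mem_indepSets, mem_indepSets,
    and_right_comm]
  exact and_congr_left fun _ => isIndep_insert_iff

lemma TriangleFree.sum_nonMemberSubfamily_indepSets {M : Type*} [AddCommMonoid M]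
    (htri : TriangleFree H) (hlin : Linear H) (v : V) (f : Finset V → M) :
    ∑ Z ∈ (indepSets H).nonMemberSubfamily v, f Z =
      ∑ W ∈ (indepSets H).nonMemberSubfamily v with Disjoint (nbhd H v) W,
        ∑ S ∈ (freeNbhd H v W).powerset, f (W ∪ S) := by
  have hmaps : ∀ Z ∈ (indepSets H).nonMemberSubfamily v, Z \ nbhd H v ∈
      ({W ∈ (indepSets H).nonMemberSubfamily v | Disjoint (nbhd H v) W} : Finset _) := by
    simp only [mem_filter, mem_nonMemberSubfamily, mem_indepSets]
    exact fun Z hZ => ⟨⟨hZ.1.mono sdiff_subset, fun hv => hZ.2 (sdiff_subset hv)⟩,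
      disjoint_sdiff⟩
  rw [← sum_fiberwise_of_maps_to hmaps]
  refine sum_congr rfl fun W hW => ?_
  simp only [mem_filter, mem_nonMemberSubfamily, mem_indepSets] at hW
  obtain ⟨⟨hWindep, hvW⟩, hWN⟩ := hW
  refine sum_nbij' (· ∩ nbhd H v) (W ∪ ·) ?_ ?_ ?_ ?_ ?_
  all_goals simp only [mem_filter, mem_nonMemberSubfamily, mem_indepSets, mem_powerset]
  · rintro Z ⟨⟨hZ, -⟩, rfl⟩
    rwa [← htri.isIndep_union_iff_subset_freeNbhd hlin hWindep hvW inter_subset_right,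
      sdiff_union_inter]
  · intro S hS
    have hSN := hS.trans freeNbhd_subset_nbhd
    refine ⟨⟨(htri.isIndep_union_iff_subset_freeNbhd hlin hWindep hvW hSN).2 hS, ?_⟩, ?_⟩
    · exact fun hv => (mem_union.1 hv).elim hvW fun hvS => notMem_nbhd_self (hSN hvS)
    · rw [union_sdiff_distrib, sdiff_eq_empty_iff_subset.2 hSN, union_empty,
        sdiff_eq_self_of_disjoint hWN.symm]
  · rintro Z ⟨-, rfl⟩
    exact sdiff_union_inter Z _
  · intro S hS
    rw [union_inter_distrib_right, inter_eq_left.2 (hS.trans freeNbhd_subset_nbhd),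
      disjoint_iff_inter_eq_empty.1 hWN.symm, empty_union]
  · rintro Z ⟨-, rfl⟩
    rw [sdiff_union_inter]

lemma sum_vertexWeight (r : ℕ) (H : Finset (Finset V)) (b : ℝ) (Z : Finset V) :
    ∑ v, vertexWeight r H b v Z = hZb r H Z b + Real.exp b * #Z := by
  simp only [vertexWeight, sum_ite, sum_const, nsmul_eq_mul, filter_univ_mem, hZb,
    ← compl_eq_univ_sdiff, filter_not]
  ring

lemma sum_vertexWeight_sub {r : ℕ} (hH : ∀ e ∈ H, #e = r + 1) (b t : ℝ) (v : V) :
    ∑ Z ∈ indepSets H, (vertexWeight r H b v Z - t) =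
      ∑ Z ∈ (indepSets H).nonMemberSubfamily v, surplus b t (H.memberSubfamily v) Z := by
  rw [sum_eq_sum_nonMemberSubfamily_add_sum_memberSubfamily _ v, memberSubfamily_indepSets,
    sum_filter, ← sum_add_distrib]
  refine sum_congr rfl fun Z hZ => ?_
  have hvZ := (mem_nonMemberSubfamily.1 hZ).2
  rw [surplus, vertexWeight, vertexWeight, if_neg hvZ, if_pos (mem_insert_self v Z),
    omegaZ_eq_min_card_filter_subset hH hvZ]

lemma sum_vertexWeight_sub_nonneg {r : ℕ} {b t : ℝ} (hH : ∀ e ∈ H, #e = r + 1)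
    (hlin : Linear H) (htri : TriangleFree H)
    (hsurplus : ∀ F : Finset V, ∀ I : Finset (Finset V), (∀ P ∈ I, P ⊆ F) → (∀ P ∈ I, #P = r) →
      (I : Set (Finset V)).PairwiseDisjoint id → 0 ≤ 𝔼 S ∈ F.powerset, surplus b t I S) (v : V) :
    0 ≤ ∑ Z ∈ indepSets H, (vertexWeight r H b v Z - t) := by
  rw [sum_vertexWeight_sub hH, htri.sum_nonMemberSubfamily_indepSets hlin]
  refine sum_nonneg fun W hW => ?_
  rw [sum_congr rfl fun S hS => surplus_union (mem_filter.1 hW).2 (mem_powerset.1 hS),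
    ← card_mul_expect]
  refine mul_nonneg (Nat.cast_nonneg _) (hsurplus _ _ (fun P hP => (mem_filter.1 hP).2) ?_ ?_)
  · exact fun P hP => card_of_mem_memberSubfamily hH (mem_of_mem_filter P hP)
  · exact (hlin.pairwiseDisjoint_memberSubfamily v).subset (coe_subset.2 (filter_subset _ _))

end Hypergraph

theorem stmt12_general (r : ℕ) (hr : 1 ≤ r) (ε : ℝ) (hε : 0 < ε) :
    ∃ b₀ : ℝ, ∀ b : ℝ, b₀ ≤ b →
      ∀ (V : Type u) [Fintype V] [DecidableEq V] (H : Finset (Finset V)),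
        (∀ e ∈ H, #e = r + 1) → Linear H → TriangleFree H →
          (1 - ε) * b * (Fintype.card V : ℝ) / (2 ^ r * (-Real.log (1 - 1 / 2 ^ r))) ≤
            𝔼 Z ∈ indepSets H, hZb r H Z b + Real.exp b * 𝔼 Z ∈ indepSets H, (#Z : ℝ) := by
  obtain ⟨b₀, hb₀⟩ := eventually_atTop.1
    (eventually_expect_surplus_nonneg.{u} hr (sub_lt_self 1 hε))
  refine ⟨b₀, fun b hb V _ _ H hH hlin htri => ?_⟩
  set t := (1 - ε) * b / (2 ^ r * avoidanceRate r) with ht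
  have hne : (indepSets H).Nonempty := ⟨∅, mem_indepSets.2 fun e he hempty => by
    simpa [subset_empty.1 hempty] using hH e he⟩
  have hvertex : ∀ v, t ≤ 𝔼 Z ∈ indepSets H, vertexWeight r H b v Z := fun v => by
    rw [← sub_nonneg, ← expect_const hne t, ← expect_sub_distrib, expect_eq_sum_div_card]
    exact div_nonneg (sum_vertexWeight_sub_nonneg hH hlin htri (hb₀ b hb V) v) (Nat.cast_nonneg _)
  calc (1 - ε) * b * (Fintype.card V : ℝ) / (2 ^ r * avoidanceRate r) = ∑ _v : V, t := by
        rw [sum_const, card_univ, nsmul_eq_mul, ht]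
        ring
    _ ≤ ∑ v, 𝔼 Z ∈ indepSets H, vertexWeight r H b v Z := sum_le_sum fun v _ => hvertex v
    _ = 𝔼 Z ∈ indepSets H, hZb r H Z b + Real.exp b * 𝔼 Z ∈ indepSets H, (#Z : ℝ) := by
        rw [← expect_sum_comm, mul_expect, ← expect_add_distrib]
        exact expect_congr rfl fun Z _ => sum_vertexWeight r H b Z

/-- For every `r ≥ 2` and `ε > 0` there is `b₀` such that for all `b ≥ b₀`
and every linear triangle-free `(r+1)`-graph `H` on a vertex set of size `m ≥ 1`,
averaging over all independent sets `Z` of `H` chosen uniformly at random,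
`E[h(Z,b)] + e^b·E[|Z|] ≥ (1−ε)·b·m/(2^r·(−log(1−2^{−r})))`. -/
theorem stmt12 (r : ℕ) (hr : 2 ≤ r) (ε : ℝ) (hε : 0 < ε) :
    ∃ b₀ : ℝ, ∀ b : ℝ, b₀ ≤ b →
      ∀ (V : Type) [Fintype V] [DecidableEq V], ∀ (H : Finset (Finset V)),
        1 ≤ Fintype.card V →
        (∀ e ∈ H, e.card = r + 1) →
        Linear H → TriangleFree H →
        ∀ Zs : Finset (Finset V),
          Zs = (Finset.univ : Finset V).powerset.filter (fun Z => IsIndep H Z) →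
          (1 - ε) * b * (Fintype.card V : ℝ) / (2 ^ r * (-Real.log (1 - 1 / 2 ^ r))) ≤
            (∑ Z ∈ Zs, hZb r H Z b) / (Zs.card : ℝ) +
              Real.exp b * ((∑ Z ∈ Zs, (Z.card : ℝ)) / (Zs.card : ℝ)) := by
  obtain ⟨b₀, hb₀⟩ := stmt12_general r (one_le_two.trans hr) ε hε
  exact ⟨b₀, fun b hb V _ _ H _ hH hlin htri Zs hZs => by
    simpa only [hZs, powerset_univ, indepSets, expect_eq_sum_div_card] using
      hb₀ b hb V H hH hlin htri⟩
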